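/- arXiv:2102.04239 — 2 statements merged into one kernel-verified Lean document; each statement's English description precedes it below -/
import Mathlib

section
/- Let X be a finite simple connected graph with minimum degree at least 2 that is not a simple cycle, and let T be a spanning tree of X. Then the homomorphism Θ_T : Aut(X) → U_β sending f to the matrix M_T(f) of its action on H_1(X,ℤ) is injective. Equivalently, Aut(X) acts faithfully on H_1(X,ℤ). -/
open SimpleGraph
variable {V : Type*}

variable {V : Type*}

/-- The cycle space (= first homology with coefficients in `R`) of a graph,
realized as antisymmetric flows supported on edges with zero divergence. -/
def cycleSpace (R : Type*) [CommRing R] [Fintype V] (G : SimpleGraph V) :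
    Submodule R (V → V → R) where
  carrier := {f | (∀ u v, ¬ G.Adj u v → f u v = 0) ∧ (∀ u v, f u v = - f v u) ∧
    (∀ u, ∑ v, f u v = 0)}
  add_mem' := by
    rintro f g ⟨hf1, hf2, hf3⟩ ⟨hg1, hg2, hg3⟩
    refine ⟨fun u v h => by simp [hf1 u v h, hg1 u v h], fun u v => ?_, fun u => ?_⟩
    · simp only [Pi.add_apply]; rw [hf2 u v, hg2 u v]; ring
    · simp [Finset.sum_add_distrib, hf3 u, hg3 u]
  zero_mem' := ⟨fun _ _ _ => rfl, fun _ _ => by simp, fun _ => by simp⟩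
  smul_mem' := by
    rintro c f ⟨h1, h2, h3⟩
    refine ⟨fun u v h => by simp [h1 u v h], fun u v => by simp [h2 u v], fun u => ?_⟩
    simp only [Pi.smul_apply, smul_eq_mul]
    rw [← Finset.mul_sum, h3 u, mul_zero]

/-- An automorphism acts trivially (as the identity) on `H_1(X,R)`. -/
def FixesH1 (R : Type*) [CommRing R] [Fintype V] (G : SimpleGraph V) (f : G ≃g G) : Prop :=
  ∀ c ∈ cycleSpace R G, ∀ u v : V, c (f u) (f v) = c u v

/-!
This is the Hopf trace formula. Let `f` act trivially on the cycles. On antisymmetric functions of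
the darts (oriented edges), `1 - f` then kills the kernel of the boundary map, hence factors through
the boundary map and has the same trace as `1 - f` on the functions of the vertices; the latter maps
into boundaries because `f` preserves the connected components. In terms of fixed points this says
that twice the number of moved vertices is the number of moved darts plus the number of darts
reversed by `f`.

If all degrees are at least `2`, the darts starting at moved vertices alone number at least twice
the moved vertices. So moved vertices have degree exactly `2`, and no dart leads from a fixed vertex
to a moved one. In a connected graph, as soon as one vertex is moved, all are, and the graph is a
cycle.
-/

open scoped Finset

section Trace

lemma trace_funLeft {R ι : Type*} [CommRing R] [Fintype ι] [DecidableEq ι] (φ : ι → ι) :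
    LinearMap.trace R (ι → R) (LinearMap.funLeft R R φ) = #{i | φ i = i} := by
  rw [LinearMap.trace_eq_matrix_trace R (Pi.basisFun R ι), Matrix.trace]
  simp [LinearMap.funLeft_apply, Pi.single_apply]

lemma trace_id_sub_funLeft {R ι : Type*} [CommRing R] [Fintype ι] [DecidableEq ι] (φ : ι → ι) :
    LinearMap.trace R (ι → R) (LinearMap.id - LinearMap.funLeft R R φ) =
      #{i | φ i ≠ i} := by
  have hcard := Finset.card_filter_add_card_filter_not (s := Finset.univ) (fun i => φ i = i)
  have hid : (LinearMap.id : (ι → R) →ₗ[R] (ι → R)) = LinearMap.funLeft R R id := rfl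
  rw [map_sub, hid, trace_funLeft, trace_funLeft]
  simp only [id_eq, Finset.filter_true, ← hcard, Nat.cast_add, add_sub_cancel_left]

variable {K A B : Type*} [Field K] [AddCommGroup A] [Module K A] [AddCommGroup B] [Module K B]

lemma exists_comp_eq_of_ker_le_ker {C : Type*} [AddCommGroup C] [Module K C] {D : A →ₗ[K] B}
    {g : A →ₗ[K] C} (h : D.ker ≤ g.ker) : ∃ k : B →ₗ[K] C, k ∘ₗ D = g := by
  obtain ⟨k, hk⟩ := (D.ker.liftQ g h ∘ₗ D.quotKerEquivRange.symm.toLinearMap).exists_extend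
  refine ⟨k, LinearMap.ext fun x => ?_⟩
  have hx : D.quotKerEquivRange.symm ⟨D x, D.mem_range_self x⟩ = D.ker.mkQ x :=
    D.quotKerEquivRange_symm_apply_image x _
  simpa [hx] using LinearMap.congr_fun hk ⟨D x, D.mem_range_self x⟩

lemma trace_eq_of_comp_eq_comp [FiniteDimensional K A] [FiniteDimensional K B]
    {D : A →ₗ[K] B} {g : Module.End K A} {h : Module.End K B} (hcomm : D ∘ₗ g = h ∘ₗ D)
    (hker : D.ker ≤ g.ker) (hrange : h.range ≤ D.range) :
    LinearMap.trace K A g = LinearMap.trace K B h := by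
  obtain ⟨k, rfl⟩ := exists_comp_eq_of_ker_le_ker hker
  -- `D ∘ k` and `h` agree on the range of `D`, and both map into it.
  have hnil : IsNilpotent (D ∘ₗ k - h) := by
    refine ⟨2, LinearMap.ext fun y => ?_⟩
    have hy : (D ∘ₗ k - h) y ∈ D.range :=
      D.range.sub_mem (D.mem_range_self _) (hrange (h.mem_range_self y))
    obtain ⟨x, hx⟩ := hy
    rw [pow_two, Module.End.mul_apply, ← hx]
    exact sub_eq_zero_of_eq (LinearMap.congr_fun hcomm x)
  have htrace := (LinearMap.isNilpotent_trace_of_isNilpotent hnil).eq_zero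
  rw [map_sub, sub_eq_zero] at htrace
  rw [LinearMap.trace_comp_comm', htrace]

end Trace

section Dart

variable {G : SimpleGraph V} {R : Type*} [CommRing R]

/-- Twice the projection of dart functions onto the antisymmetric ones, which are the
`1`-chains of `G`. Leaving out the factor `1 / 2` keeps the coefficients arbitrary. -/
def antisymmetrization (R : Type*) [CommRing R] (G : SimpleGraph V) :
    (G.Dart → R) →ₗ[R] (G.Dart → R) :=
  LinearMap.id - LinearMap.funLeft R R Dart.symm

lemma antisymmetrization_apply (c : G.Dart → R) (d : G.Dart) :
    antisymmetrization R G c d = c d - c d.symm := rfl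

lemma antisymmetrization_apply_symm (c : G.Dart → R) (d : G.Dart) :
    antisymmetrization R G c d.symm = -antisymmetrization R G c d := by
  simp only [antisymmetrization_apply, Dart.symm_symm, neg_sub]

lemma antisymmetrization_antisymmetrization (c : G.Dart → R) :
    antisymmetrization R G (antisymmetrization R G c) = (2 : R) • antisymmetrization R G c := by
  ext d
  rw [antisymmetrization_apply, antisymmetrization_apply_symm, sub_neg_eq_add, Pi.smul_apply,
    two_smul]

lemma antisymmetrization_comp_mapDart (f : G →g G) (c : G.Dart → R) :
    antisymmetrization R G (c ∘ f.mapDart) = antisymmetrization R G c ∘ f.mapDart := rfl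

lemma trace_id_sub_funLeft_comp_antisymmetrization [Fintype V] [DecidableEq V]
    [DecidableRel G.Adj] (φ : G.Dart → G.Dart) :
    LinearMap.trace R _ ((LinearMap.id - LinearMap.funLeft R R φ) ∘ₗ antisymmetrization R G) =
      #{d | φ d ≠ d} + #{d | φ d = d.symm} := by
  have hexpand : (LinearMap.id - LinearMap.funLeft R R φ) ∘ₗ antisymmetrization R G =
      (LinearMap.id - LinearMap.funLeft R R φ) - LinearMap.funLeft R R Dart.symm +
        LinearMap.funLeft R R (Dart.symm ∘ φ) := by
    refine LinearMap.ext fun c => funext fun d => ?_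
    simp only [antisymmetrization, LinearMap.comp_apply, LinearMap.sub_apply, LinearMap.add_apply,
      LinearMap.id_apply, LinearMap.funLeft_apply, Pi.sub_apply, Pi.add_apply, Function.comp_apply]
    abel
  have hflip (d : G.Dart) : (φ d).symm = d ↔ φ d = d.symm :=
    Dart.symm_involutive.eq_iff
  simp [hexpand, trace_id_sub_funLeft, trace_funLeft, hflip, Dart.symm_ne]

lemma ncard_neighborSet_eq_degree (v : V) [Fintype (G.neighborSet v)] :
    (G.neighborSet v).ncard = G.degree v := by
  rw [Set.ncard_eq_toFinset_card', Set.toFinset_card, card_neighborSet_eq_degree]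

lemma card_filter_dart_fst [Fintype V] [DecidableRel G.Adj] (p : V → Prop)
    [DecidablePred p] : #{d : G.Dart | p d.fst} = ∑ v with p v, G.degree v := by
  classical
  rw [Finset.card_eq_sum_card_fiberwise (f := fun d : G.Dart => d.fst) (t := {v | p v})
    (fun d hd => by simpa using hd)]
  refine Finset.sum_congr rfl fun v hv => ?_
  rw [← G.dart_fst_fiber_card_eq_degree v, Finset.filter_filter]
  have hpv : p v := (Finset.mem_filter.1 hv).2
  exact congrArg Finset.card <| Finset.filter_congr fun d _ =>
    and_iff_right_of_imp fun hd => hd ▸ hpv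

/-- The extension by zero of a function on the darts of `G` to all pairs of vertices, the form
in which the elements of `cycleSpace` are given. -/
def dartFlow [DecidableRel G.Adj] (c : G.Dart → R) (u v : V) : R :=
  if h : G.Adj u v then c ⟨(u, v), h⟩ else 0

lemma dartFlow_fst_snd [DecidableRel G.Adj] (c : G.Dart → R) (d : G.Dart) :
    dartFlow c d.fst d.snd = c d := dif_pos d.adj

lemma dartFlow_comp_mapDart [DecidableRel G.Adj] (f : G ≃g G) (c : G.Dart → R) (u v : V) :
    dartFlow (c ∘ f.toHom.mapDart) u v = dartFlow c (f u) (f v) := by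
  simp only [dartFlow, f.map_adj_iff]
  rfl

variable [Fintype V] [DecidableEq V] [DecidableRel G.Adj]

/-- The net flow out of each vertex. On antisymmetric functions this is, up to sign, the boundary
map from `1`-chains to `0`-chains. -/
def divergence (R : Type*) [CommRing R] (G : SimpleGraph V) [DecidableRel G.Adj] :
    (G.Dart → R) →ₗ[R] (V → R) :=
  LinearMap.pi fun v => ∑ d : G.Dart with d.fst = v, LinearMap.proj d

lemma divergence_apply (c : G.Dart → R) (v : V) :
    divergence R G c v = ∑ d : G.Dart with d.fst = v, c d := by
  simp [divergence]

lemma sum_dartFlow (c : G.Dart → R) (u : V) : ∑ v, dartFlow c u v = divergence R G c u := by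
  rw [divergence_apply]
  symm
  refine Finset.sum_of_injOn (fun d => d.snd) ?_ (fun _ _ => by simp)
    (fun v _ hv => dif_neg fun h => ?_) ?_
  · intro d hd e he hde
    simp only [Finset.coe_filter, Finset.mem_univ, true_and, Set.mem_ofPred_eq] at hd he
    exact Dart.ext _ _ (Prod.ext (hd.trans he.symm) hde)
  · exact hv ⟨⟨(u, v), h⟩, by simp, rfl⟩
  · intro d hd
    obtain rfl := (Finset.mem_filter.1 hd).2
    exact (dartFlow_fst_snd c d).symm

lemma divergence_comp_mapDart (f : G ≃g G) (c : G.Dart → R) :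
    divergence R G (c ∘ f.toHom.mapDart) = divergence R G c ∘ f := by
  ext u
  simp only [← sum_dartFlow, dartFlow_comp_mapDart, Function.comp_apply]
  exact Equiv.sum_comp f.toEquiv (dartFlow c (f u))

lemma divergence_antisymmetrization_single (d : G.Dart) :
    divergence R G (antisymmetrization R G (Pi.single d 1)) =
      Pi.single d.fst 1 - Pi.single d.snd 1 := by
  ext u
  simp [divergence_apply, antisymmetrization_apply, Pi.single_apply,
    Dart.symm_involutive.eq_iff, eq_comm (a := u)]

lemma single_sub_single_mem_range_divergence {u v : V} (h : G.Reachable u v) :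
    (Pi.single u 1 - Pi.single v 1 : V → R) ∈
      (divergence R G ∘ₗ antisymmetrization R G).range := by
  obtain ⟨w⟩ := h
  induction w with
  | nil => simp
  | @cons u v w huv _ ih =>
    rw [← sub_add_sub_cancel _ (Pi.single v 1)]
    exact Submodule.add_mem _ ⟨_, divergence_antisymmetrization_single ⟨(u, v), huv⟩⟩ ih

lemma range_id_sub_funLeft_le_range_divergence {σ : Equiv.Perm V}
    (hσ : ∀ v, G.Reachable (σ v) v) :
    (LinearMap.id - LinearMap.funLeft R R σ).range ≤
      (divergence R G ∘ₗ antisymmetrization R G).range := by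
  rw [LinearMap.range_le_iff_comap, Submodule.eq_top_iff_forall_basis_mem (Pi.basisFun R V)]
  intro v
  have hsingle : LinearMap.funLeft R R σ (Pi.single v 1) = Pi.single (σ.symm v) 1 := by
    ext u
    simp [LinearMap.funLeft_apply, Pi.single_apply, Equiv.eq_symm_apply]
  rw [Pi.basisFun_apply, Submodule.mem_comap, LinearMap.sub_apply, LinearMap.id_apply, hsingle]
  exact single_sub_single_mem_range_divergence (by simpa using hσ (σ.symm v))

end Dart

namespace FixesH1

variable [Fintype V] {G : SimpleGraph V} {f : G ≃g G} {R : Type*} [CommRing R]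

lemma rat_of_charZero [CharZero R] (hf : FixesH1 R G f) : FixesH1 ℚ G f := by
  rintro c ⟨hsupp, hanti, hdiv⟩ u v
  obtain ⟨b, hb⟩ := IsLocalization.exist_integer_multiples_of_finite (nonZeroDivisors ℤ)
    (fun p : V × V => c p.1 p.2)
  choose n hn using fun u v => hb (u, v)
  have hb0 : (b : ℚ) ≠ 0 := mod_cast nonZeroDivisors.ne_zero b.2
  replace hn (u v : V) : (n u v : ℚ) = b * c u v := by simpa using hn u v
  have hmem : (fun u v => (n u v : R)) ∈ cycleSpace R G := by
    refine ⟨fun u v h => ?_, fun u v => ?_, fun u => ?_⟩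
    · have : (n u v : ℚ) = 0 := by rw [hn, hsupp u v h, mul_zero]
      beta_reduce
      exact_mod_cast this
    · have : (n u v : ℚ) = -n v u := by rw [hn, hn, hanti, mul_neg]
      beta_reduce
      exact_mod_cast this
    · have : (∑ v, n u v : ℚ) = 0 := by simp only [hn, ← Finset.mul_sum, hdiv, mul_zero]
      beta_reduce
      exact_mod_cast this
  have hfix : (n (f u) (f v) : ℚ) = n u v := mod_cast hf _ hmem u v
  exact mul_left_cancel₀ hb0 (by rwa [hn, hn] at hfix)

variable [DecidableRel G.Adj]

lemma comp_mapDart_eq [DecidableEq V] (hf : FixesH1 R G f) {c : G.Dart → R}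
    (hanti : ∀ d, c d.symm = -c d) (hdiv : divergence R G c = 0) : c ∘ f.toHom.mapDart = c := by
  have hmem : dartFlow c ∈ cycleSpace R G := by
    refine ⟨fun u v h => dif_neg h, fun u v => ?_, fun u => ?_⟩
    · by_cases h : G.Adj u v
      · simpa [dartFlow, h, h.symm] using hanti ⟨(v, u), h.symm⟩
      · simp [dartFlow, h, G.adj_comm v u]
    · rw [sum_dartFlow, hdiv, Pi.zero_apply]
  ext d
  calc
    c (f.toHom.mapDart d) = dartFlow c (f d.fst) (f d.snd) :=
      (dartFlow_fst_snd c (f.toHom.mapDart d)).symm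
    _ = dartFlow c d.fst d.snd := hf _ hmem d.fst d.snd
    _ = c d := dartFlow_fst_snd c d

lemma two_mul_card_moved [DecidableEq V] [CharZero R] (hf : FixesH1 R G f)
    (hreach : ∀ v, G.Reachable (f v) v) :
    2 * #{v | f v ≠ v} =
      #{d | f.toHom.mapDart d ≠ d} + #{d | f.toHom.mapDart d = d.symm} := by
  let A := antisymmetrization ℚ G
  let D := divergence ℚ G ∘ₗ A
  let F₁ := LinearMap.funLeft ℚ ℚ f.toHom.mapDart
  let F₀ := LinearMap.funLeft ℚ ℚ f.toEquiv
  have hcomm : D ∘ₗ ((LinearMap.id - F₁) ∘ₗ A) = ((2 : ℚ) • (LinearMap.id - F₀)) ∘ₗ D := by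
    have hDF (c : G.Dart → ℚ) : D (F₁ c) = F₀ (D c) := by
      change divergence ℚ G (antisymmetrization ℚ G (c ∘ f.toHom.mapDart)) =
        divergence ℚ G (antisymmetrization ℚ G c) ∘ f
      rw [antisymmetrization_comp_mapDart, divergence_comp_mapDart]
    have hDA (c : G.Dart → ℚ) : D (A c) = (2 : ℚ) • D c := by
      simp only [D, A, LinearMap.comp_apply, antisymmetrization_antisymmetrization, map_smul]
    refine LinearMap.ext fun c => ?_
    simp only [LinearMap.comp_apply, LinearMap.sub_apply, LinearMap.id_apply, LinearMap.smul_apply,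
      map_sub, smul_sub, map_smul, hDF, hDA]
  have hker : D.ker ≤ ((LinearMap.id - F₁) ∘ₗ A).ker := fun c hc => by
    have hfix : A c ∘ f.toHom.mapDart = A c :=
      hf.rat_of_charZero.comp_mapDart_eq (antisymmetrization_apply_symm c) hc
    exact sub_eq_zero_of_eq hfix.symm
  have hrange : ((2 : ℚ) • (LinearMap.id - F₀)).range ≤ D.range := by
    rw [LinearMap.range_smul _ _ two_ne_zero]
    exact range_id_sub_funLeft_le_range_divergence hreach
  have htrace := trace_eq_of_comp_eq_comp hcomm hker hrange
  rw [trace_id_sub_funLeft_comp_antisymmetrization, map_smul, trace_id_sub_funLeft,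
    smul_eq_mul] at htrace
  exact_mod_cast htrace.symm

lemma sum_degree_moved_add_card_le [DecidableEq V] [CharZero R] (hf : FixesH1 R G f)
    (hreach : ∀ v, G.Reachable (f v) v) :
    ∑ v with f v ≠ v, G.degree v + #{d : G.Dart | f d.fst = d.fst ∧ f d.snd ≠ d.snd} ≤
      2 * #{v | f v ≠ v} := by
  have hdisj : Disjoint (Finset.univ.filter fun d : G.Dart => f d.fst ≠ d.fst)
      (Finset.univ.filter fun d : G.Dart => f d.fst = d.fst ∧ f d.snd ≠ d.snd) :=
    Finset.disjoint_filter.2 fun d _ hd hd' => hd hd'.1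
  rw [hf.two_mul_card_moved hreach, ← card_filter_dart_fst, ← Finset.card_union_of_disjoint hdisj]
  refine le_add_right (Finset.card_le_card fun d hd => ?_)
  simp only [Finset.mem_union, Finset.mem_filter, Finset.mem_univ, true_and] at hd ⊢
  intro hfix
  have hfst : f d.fst = d.fst := congrArg (fun d => d.fst) hfix
  have hsnd : f d.snd = d.snd := congrArg (fun d => d.snd) hfix
  tauto

lemma degree_eq_two_of_apply_ne [CharZero R] (hf : FixesH1 R G f)
    (hreach : ∀ v, G.Reachable (f v) v) (hmin : ∀ v, f v ≠ v → 2 ≤ G.degree v) {v : V}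
    (hv : f v ≠ v) : G.degree v = 2 := by
  classical
  have hle : ∀ v ∈ Finset.univ.filter (fun v => f v ≠ v), 2 ≤ G.degree v := by
    simpa using hmin
  have hsum : ∑ v with f v ≠ v, 2 = ∑ v with f v ≠ v, G.degree v := by
    refine (Finset.sum_le_sum hle).antisymm ?_
    rw [Finset.sum_const, smul_eq_mul, mul_comm]
    exact le_self_add.trans (hf.sum_degree_moved_add_card_le hreach)
  exact ((Finset.sum_eq_sum_iff_of_le hle).1 hsum v (by simpa using hv)).symm

lemma apply_ne_of_adj [CharZero R] (hf : FixesH1 R G f)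
    (hreach : ∀ v, G.Reachable (f v) v) (hmin : ∀ v, f v ≠ v → 2 ≤ G.degree v) {u v : V}
    (huv : G.Adj u v) (hv : f v ≠ v) : f u ≠ u := by
  classical
  intro hu
  have hpos : 0 < #{d : G.Dart | f d.fst = d.fst ∧ f d.snd ≠ d.snd} :=
    Finset.card_pos.2 ⟨⟨(u, v), huv⟩, by simpa using ⟨hu, hv⟩⟩
  have hsum : 2 * #{v | f v ≠ v} ≤ ∑ v with f v ≠ v, G.degree v := by
    rw [mul_comm]
    exact Finset.card_nsmul_le_sum _ _ 2 (by simpa using hmin)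
  have := hf.sum_degree_moved_add_card_le hreach
  omega

end FixesH1

theorem aut_faithful_on_H1_general {R : Type*} [CommRing R] [CharZero R] [Fintype V]
    {G : SimpleGraph V} (hG : G.Connected) (hmin : ∀ v : V, 2 ≤ (G.neighborSet v).ncard)
    (hnotcyc : ¬ ∀ v : V, (G.neighborSet v).ncard = 2) {f : G ≃g G} (hf : FixesH1 R G f) (v : V) :
    f v = v := by
  classical
  simp only [ncard_neighborSet_eq_degree] at hmin hnotcyc
  have hreach (v : V) : G.Reachable (f v) v := hG.preconnected _ _
  by_contra hv
  have hmoved (u : V) : f u ≠ u := by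
    obtain ⟨p⟩ := hG.preconnected u v
    induction p with
    | nil => exact hv
    | cons hadj _ ih => exact hf.apply_ne_of_adj hreach (fun v _ => hmin v) hadj (ih hv)
  exact hnotcyc fun u => hf.degree_eq_two_of_apply_ne hreach (fun v _ => hmin v) (hmoved u)

theorem aut_faithful_on_H1 [Fintype V]
    (G : SimpleGraph V) (hG : G.Connected)
    (hmin : ∀ v : V, 2 ≤ (G.neighborSet v).ncard)
    (hnotcyc : ¬ ∀ v : V, (G.neighborSet v).ncard = 2)
    (T : SimpleGraph V) (hTG : T ≤ G) (hT : T.IsTree) :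
    ∀ f : G ≃g G, FixesH1 ℤ G f → ∀ v : V, f v = v :=
  fun _ hf => aut_faithful_on_H1_general hG hmin hnotcyc hf
end

section
/- Let X be a finite simple connected 2-edge-connected graph that is not a simple cycle. Then every nonidentity automorphism of X acts nontrivially on H_1(X,ℤ). -/
open SimpleGraph
variable {V : Type*}

variable {V : Type*}

/-!
Suppose `f` acts trivially on homology and no edge is a bridge. A cycle then contains an edge `e`
if and only if it contains `f e`, so if `f e ≠ e` these two edges form a 2-edge cut, and this cut
separates an endpoint `w` of `e` from `f w`. Hence a vertex fixed by `f` has only fixed neighbours,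
and by connectedness `f` is the identity as soon as it fixes a vertex.

If `f w ≠ w` and some edge `wb` is missed by a cycle `C` through `w`, then `C` crosses neither edge
of the cut `{wb, f(wb)}`, so it stays on the side of `w`. But `C` passes through `f w`, because its
flow is the same at `f w` as at `w`. So `C` uses all edges at `w`, that is, `w` has degree 2.
-/

section walkFlow

variable (R : Type*) [Ring R] [DecidableEq V] {G : SimpleGraph V}

/-- The unit flow along the arc from `x` to `y`, as an antisymmetric function of two vertices. -/
def arcFlow (x y : V) : V → V → R := fun u v ↦
  (if u = x ∧ v = y then 1 else 0) - (if u = y ∧ v = x then 1 else 0)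

/-- The 1-chain of a walk: each arc `(u, v)` counts its traversals from `u` to `v` minus those
from `v` to `u`. -/
def walkFlow : {x y : V} → G.Walk x y → V → V → R
  | _, _, .nil => 0
  | x, _, .cons (v := z) _ p => arcFlow R x z + walkFlow p

theorem arcFlow_eq_zero {x y u v : V} (h : s(u, v) ≠ s(x, y)) : arcFlow R x y u v = 0 := by
  grind [arcFlow]

theorem arcFlow_eq_one_or_neg_one {x y u v : V} (hxy : x ≠ y) (h : s(u, v) = s(x, y)) :
    arcFlow R x y u v = 1 ∨ arcFlow R x y u v = -1 := by
  grind [arcFlow]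

theorem walkFlow_antisymm {x y : V} (p : G.Walk x y) (u v : V) :
    walkFlow R p u v = -walkFlow R p v u := by
  induction p with
  | nil => simp [walkFlow]
  | cons _ p ih =>
    simp only [walkFlow, arcFlow, Pi.add_apply, ih, and_comm]
    abel

theorem sum_walkFlow [Fintype V] {x y : V} (p : G.Walk x y) (u : V) :
    ∑ v, walkFlow R p u v = (if u = x then 1 else 0) - (if u = y then 1 else 0) := by
  induction p with
  | nil => simp [walkFlow]
  | cons _ p ih =>
    simp [walkFlow, arcFlow, Finset.sum_add_distrib, ih, ite_and]

theorem walkFlow_eq_zero {x y u v : V} (p : G.Walk x y) (h : s(u, v) ∉ p.edges) :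
    walkFlow R p u v = 0 := by
  induction p with
  | nil => rfl
  | cons _ p ih =>
    rw [Walk.edges_cons, List.mem_cons, not_or] at h
    simp [walkFlow, arcFlow_eq_zero R h.1, ih h.2]

theorem walkFlow_eq_one_or_neg_one {x y u v : V} {p : G.Walk x y} (hp : p.IsTrail)
    (h : s(u, v) ∈ p.edges) : walkFlow R p u v = 1 ∨ walkFlow R p u v = -1 := by
  induction p with
  | nil => simp at h
  | @cons x z _ hxz p ih =>
    obtain ⟨hp, hnotMem⟩ := (Walk.isTrail_cons hxz p).1 hp
    by_cases hhead : s(u, v) = s(x, z)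
    · simpa [walkFlow, walkFlow_eq_zero R p (hhead ▸ hnotMem)] using
        arcFlow_eq_one_or_neg_one R hxz.ne hhead
    · have htail : s(u, v) ∈ p.edges := by simpa [hhead] using h
      simpa [walkFlow, arcFlow_eq_zero R hhead] using ih hp htail

theorem walkFlow_ne_zero [Nontrivial R] {x y u v : V} {p : G.Walk x y} (hp : p.IsTrail)
    (h : s(u, v) ∈ p.edges) : walkFlow R p u v ≠ 0 := by
  rcases walkFlow_eq_one_or_neg_one R hp h with h | h <;> simp [h]

end walkFlow

section cycleSpace

variable {R : Type*} [CommRing R] [Fintype V] {G : SimpleGraph V} {c : V → V → R}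

theorem walkFlow_mem_cycleSpace [DecidableEq V] {x : V} (p : G.Walk x x) :
    walkFlow R p ∈ cycleSpace R G :=
  ⟨fun _ _ h ↦ walkFlow_eq_zero R p fun he ↦ h (p.adj_of_mem_edges he), walkFlow_antisymm R p,
    fun u ↦ by simp [sum_walkFlow]⟩

theorem sum_cut_eq_zero [DecidableEq V] (hc : c ∈ cycleSpace R G) (S : Finset V) :
    ∑ u ∈ S, ∑ v ∈ Sᶜ, c u v = 0 := by
  obtain ⟨hsupp, hanti, hdiv⟩ := hc
  have hinside : ∑ u ∈ S, ∑ v ∈ S, c u v = 0 := by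
    rw [← Finset.sum_product']
    refine Finset.sum_involution (fun e _ ↦ e.swap) (fun e _ ↦ ?_) (fun e _ hne hswap ↦ ?_)
      (fun e he ↦ ?_) (fun e _ ↦ e.swap_swap)
    · simp [hanti e.1 e.2]
    · obtain ⟨u, v⟩ := e
      obtain rfl : v = u := congrArg Prod.fst hswap
      exact hne (hsupp v v G.irrefl)
    · simpa [and_comm] using he
  have htotal : ∑ u ∈ S, (∑ v ∈ S, c u v + ∑ v ∈ Sᶜ, c u v) = 0 := by
    simp [Finset.sum_add_sum_compl, hdiv]
  simpa [Finset.sum_add_distrib, hinside] using htotal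

theorem add_eq_zero_of_cut (hc : c ∈ cycleSpace R G) {S : Set V} {w a u v : V}
    (hw : w ∈ S) (ha : a ∉ S) (hu : u ∈ S) (hv : v ∉ S) (hne : s(w, a) ≠ s(u, v))
    (hcut : ∀ x ∈ S, ∀ y ∉ S, G.Adj x y → s(x, y) = s(w, a) ∨ s(x, y) = s(u, v)) :
    c w a + c u v = 0 := by
  classical
  rw [← sum_cut_eq_zero hc S.toFinset, ← Finset.sum_product']
  symm
  refine Finset.sum_eq_add (w, a) (u, v) (fun h ↦ hne (congrArg Sym2.mk.uncurry h))
    (fun ⟨x, y⟩ hxy hxyne ↦ hc.1 x y fun hadj ↦ ?_) (by simp [hw, ha]) (by simp [hu, hv])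
  obtain ⟨hx, hy⟩ : x ∈ S ∧ y ∉ S := by simpa using hxy
  have hcases := hcut x hx y hy hadj
  simp only [Sym2.eq_iff] at hcases
  grind

theorem restrict_mem_cycleSpace (hc : c ∈ cycleSpace R G) (S : Set V) [DecidablePred (· ∈ S)]
    (hcut : ∀ u ∈ S, ∀ v ∉ S, c u v = 0) :
    (fun u v ↦ if u ∈ S ∧ v ∈ S then c u v else 0) ∈ cycleSpace R G := by
  obtain ⟨hsupp, hanti, hdiv⟩ := hc
  refine ⟨fun u v h ↦ by simp [hsupp u v h], fun u v ↦ by grind, fun u ↦ ?_⟩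
  by_cases hu : u ∈ S
  · rw [← hdiv u]
    exact Finset.sum_congr rfl fun v _ ↦ by grind
  · simp [hu]

end cycleSpace

section TwoEdgeCut

variable {G : SimpleGraph V}

theorem exists_isCycle_of_not_isBridge {e : Sym2 V} (he : e ∈ G.edgeSet)
    (hbridge : ¬ G.IsBridge e) : ∃ (x : V) (p : G.Walk x x), p.IsCycle ∧ e ∈ p.edges := by
  simpa [isBridge_iff_forall_cycle_notMem he] using hbridge

theorem isBridge_deleteEdges_of_forall_isCycle {e e' : Sym2 V} (he : e ∈ G.edgeSet) (hne : e ≠ e')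
    (h : ∀ ⦃x : V⦄ (p : G.Walk x x), p.IsCycle → e ∈ p.edges → e' ∈ p.edges) :
    (G.deleteEdges {e'}).IsBridge e := by
  rw [isBridge_iff_forall_cycle_notMem (by simp [he, hne])]
  intro x p hp hep
  have he' : e' ∈ p.edges := by
    simpa using h (p.mapLe (deleteEdges_le _)) (hp.mapLe _) (by simpa using hep)
  simpa using p.edges_subset_edgeSet he'

theorem mem_of_adj_of_not_reachable_deleteEdges {s : Set (Sym2 V)} {w x y : V}
    (hx : (G.deleteEdges s).Reachable w x) (hy : ¬ (G.deleteEdges s).Reachable w y)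
    (hadj : G.Adj x y) : s(x, y) ∈ s := by
  by_contra hs
  exact hy (hx.trans (deleteEdges_adj.2 ⟨hadj, hs⟩).reachable)

end TwoEdgeCut

section FixesH1

variable {R : Type*} [CommRing R] [Fintype V] {G : SimpleGraph V} {f : G ≃g G} {w a : V}

theorem FixesH1.mem_edges_iff [Nontrivial R] (hf : FixesH1 R G f) {x : V} {p : G.Walk x x}
    (hp : p.IsTrail) : s(f w, f a) ∈ p.edges ↔ s(w, a) ∈ p.edges := by
  classical
  have hfix : walkFlow R p (f w) (f a) = walkFlow R p w a := hf _ (walkFlow_mem_cycleSpace p) w a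
  constructor <;> intro he <;> by_contra hnotMem
  · exact walkFlow_ne_zero R hp he (hfix.trans (walkFlow_eq_zero R p hnotMem))
  · exact walkFlow_ne_zero R hp he (hfix.symm.trans (walkFlow_eq_zero R p hnotMem))

theorem FixesH1.edge_ne_map (h2 : (2 : R) ≠ 0) (hf : FixesH1 R G f) (hadj : G.Adj w a)
    (hbridge : ¬ G.IsBridge s(w, a)) (hw : f w ≠ w) : s(w, a) ≠ s(f w, f a) := by
  classical
  intro h
  obtain ⟨hwa, haw⟩ : w = f a ∧ a = f w := by
    simpa [hw.symm] using Sym2.eq_iff.1 h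
  obtain ⟨x, p, hp, he⟩ := exists_isCycle_of_not_isBridge hadj hbridge
  have hfix : walkFlow R p a w = walkFlow R p w a := by
    simpa only [← hwa, ← haw] using hf _ (walkFlow_mem_cycleSpace p) w a
  rw [walkFlow_antisymm] at hfix
  grind [walkFlow_eq_one_or_neg_one R hp.isTrail he]

/-- An edge and its distinct image form a 2-edge cut. If `w` and `f w` were on the same side of it,
a cycle through both edges would cross the cut twice in the same direction. -/
theorem FixesH1.not_reachable_map (h2 : (2 : R) ≠ 0) (hf : FixesH1 R G f) (hadj : G.Adj w a)
    (hbridge : ¬ G.IsBridge s(w, a)) (hne : s(w, a) ≠ s(f w, f a)) :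
    ¬ (G.deleteEdges {s(w, a), s(f w, f a)}).Reachable w (f w) := by
  classical
  have : Nontrivial R := nontrivial_of_ne 2 0 h2
  intro hfw
  set H := G.deleteEdges {s(w, a), s(f w, f a)}
  have ha : ¬ H.Reachable w a := by
    have hbr := isBridge_deleteEdges_of_forall_isCycle hadj hne fun _ _ hp ↦
      (hf.mem_edges_iff hp.isTrail).2
    rwa [isBridge_iff, deleteEdges_deleteEdges, Set.singleton_union, Set.pair_comm] at hbr
  have hfwfa : ¬ H.Reachable (f w) (f a) := by
    have hbr := isBridge_deleteEdges_of_forall_isCycle (f.map_adj_iff.2 hadj) hne.symm fun _ _ hp ↦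
      (hf.mem_edges_iff hp.isTrail).1
    rwa [isBridge_iff, deleteEdges_deleteEdges, Set.singleton_union] at hbr
  obtain ⟨x, p, hp, he⟩ := exists_isCycle_of_not_isBridge hadj hbridge
  have hp_mem := walkFlow_mem_cycleSpace (R := R) p
  have hcancel : walkFlow R p w a + walkFlow R p (f w) (f a) = 0 :=
    add_eq_zero_of_cut (S := {v | H.Reachable w v}) hp_mem .rfl ha hfw
      (fun hfa ↦ hfwfa (hfw.symm.trans hfa)) hne
      fun _ hx _ hy h ↦ mem_of_adj_of_not_reachable_deleteEdges hx hy h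
  rw [hf _ hp_mem] at hcancel
  grind [walkFlow_eq_one_or_neg_one R hp.isTrail he]

theorem FixesH1.eq_zero_of_not_reachable_map (hf : FixesH1 R G f) {b : V} {c : V → V → R}
    (hsep : ¬ (G.deleteEdges {s(w, b), s(f w, f b)}).Reachable w (f w))
    (hc : c ∈ cycleSpace R G) (hcb : c w b = 0) : c w a = 0 := by
  classical
  set H := G.deleteEdges {s(w, b), s(f w, f b)}
  have hcut : ∀ u ∈ {u | H.Reachable w u}, ∀ v ∉ {v | H.Reachable w v}, c u v = 0 := by
    intro u hu v hv
    by_cases hadj : G.Adj u v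
    · have hmem := mem_of_adj_of_not_reachable_deleteEdges hu hv hadj
      have hcfb := hf c hc w b
      have hanti := hc.2.1
      simp only [Set.mem_insert_iff, Set.mem_singleton_iff, Sym2.eq_iff] at hmem
      grind
    · exact hc.1 u v hadj
  by_contra hca
  have ha : H.Reachable w a := by
    by_contra ha
    exact hca (hcut w .rfl a ha)
  have hfix := hf _ (restrict_mem_cycleSpace hc {u | H.Reachable w u} hcut) w a
  exact hca (by simpa [hsep, ha] using hfix.symm)

theorem FixesH1.map_eq_self_of_adj (h2 : (2 : R) ≠ 0) (hf : FixesH1 R G f) (hadj : G.Adj w a)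
    (hbridge : ¬ G.IsBridge s(w, a)) (hw : f w = w) : f a = a := by
  by_contra ha
  have hne : s(w, a) ≠ s(f w, f a) := by
    rw [hw, Ne, Sym2.congr_right]
    exact Ne.symm ha
  apply hf.not_reachable_map h2 hadj hbridge hne
  rw [hw]

theorem FixesH1.ncard_neighborSet_eq_two (h2 : (2 : R) ≠ 0) (hf : FixesH1 R G f)
    (hbridge : ∀ b, G.Adj w b → ¬ G.IsBridge s(w, b)) (hw : f w ≠ w) (hadj : G.Adj w a) :
    (G.neighborSet w).ncard = 2 := by
  classical
  have : Nontrivial R := nontrivial_of_ne 2 0 h2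
  obtain ⟨x, p, hp, he⟩ := exists_isCycle_of_not_isBridge hadj (hbridge a hadj)
  have hflow : walkFlow R p w a ≠ 0 := walkFlow_ne_zero R hp.isTrail he
  suffices G.neighborSet w = p.toSubgraph.neighborSet w by
    rw [this, hp.ncard_neighborSet_toSubgraph_eq_two (p.fst_mem_support_of_mem_edges he)]
  refine subset_antisymm (fun b hb ↦ ?_) (p.toSubgraph.neighborSet_subset w)
  by_contra hbp
  have hflow_b : walkFlow R p w b = 0 :=
    walkFlow_eq_zero R p fun hmem ↦ hbp (Walk.adj_toSubgraph_iff_mem_edges.2 hmem)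
  have hsep := hf.not_reachable_map h2 hb (hbridge b hb) (hf.edge_ne_map h2 hb (hbridge b hb) hw)
  exact hflow (hf.eq_zero_of_not_reachable_map hsep (walkFlow_mem_cycleSpace p) hflow_b)

end FixesH1

theorem nonidentity_aut_acts_nontrivially_on_H1_general {R : Type*} [CommRing R] [Fintype V]
    (h2 : (2 : R) ≠ 0) (G : SimpleGraph V) (hG : G.Preconnected)
    (hbridgeless : ∀ e ∈ G.edgeSet, ¬ G.IsBridge e)
    (hnotcyc : ¬ ∀ v : V, (G.neighborSet v).ncard = 2) (f : G ≃g G) (hne : ∃ v : V, f v ≠ v) :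
    ¬ FixesH1 R G f := by
  intro hf
  obtain ⟨v, hv⟩ := hne
  obtain ⟨w, hdeg⟩ := not_forall.1 hnotcyc
  have hw : f w ≠ w := by
    intro hw
    obtain ⟨p⟩ := hG w v
    obtain ⟨d, -, hfst, hsnd⟩ := p.exists_boundary_dart {u | f u = u} hw hv
    exact hsnd (hf.map_eq_self_of_adj h2 d.adj (hbridgeless _ d.adj) hfst)
  have : Nontrivial V := nontrivial_of_ne _ _ hw
  obtain ⟨a, ha⟩ := hG.exists_adj_of_nontrivial w
  exact hdeg (hf.ncard_neighborSet_eq_two h2 (fun b hb ↦ hbridgeless _ hb) hw ha)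

theorem nonidentity_aut_acts_nontrivially_on_H1 [Fintype V]
    (G : SimpleGraph V) (hG : G.Connected)
    (hbridgeless : ∀ e ∈ G.edgeSet, ¬ G.IsBridge e)
    (hnotcyc : ¬ ∀ v : V, (G.neighborSet v).ncard = 2) :
    ∀ f : G ≃g G, (∃ v : V, f v ≠ v) → ¬ FixesH1 ℤ G f :=
  nonidentity_aut_acts_nontrivially_on_H1_general two_ne_zero G hG.preconnected
    hbridgeless hnotcyc
end
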